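/- arXiv:1206.0411 — 2 statements merged into one kernel-verified Lean document; each statement's English description precedes it below -/
import Mathlib

section
/- U(q) is a Sylow 3-subgroup of Ree(q), and any two distinct Ree(q)-conjugates of U(q) intersect in the trivial subgroup. -/
open Matrix


noncomputable section

namespace ReePaper

variable {F : Type*} [Field F] [Fintype F]

/-- The matrix `α(x)`. -/
def amat (t : ℕ) (x : F) : Matrix (Fin 7) (Fin 7) F :=
  !![1, x^t, 0, 0, -x^(3*t+1), -x^(3*t+2), x^(4*t+2);
     0, 1, x, x^(t+1), -x^(2*t+1), 0, -x^(3*t+2);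
     0, 0, 1, x^t, -x^(2*t), 0, x^(3*t+1);
     0, 0, 0, 1, x^t, 0, 0;
     0, 0, 0, 0, 1, -x, x^(t+1);
     0, 0, 0, 0, 0, 1, -x^t;
     0, 0, 0, 0, 0, 0, 1]

/-- The matrix `β(x)`. -/
def bmat (t : ℕ) (x : F) : Matrix (Fin 7) (Fin 7) F :=
  !![1, 0, -x^t, 0, -x, 0, -x^(t+1);
     0, 1, 0, x^t, 0, -x^(2*t), 0;
     0, 0, 1, 0, 0, 0, x;
     0, 0, 0, 1, 0, x^t, 0;
     0, 0, 0, 0, 1, 0, x^t;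
     0, 0, 0, 0, 0, 1, 0;
     0, 0, 0, 0, 0, 0, 1]

/-- The matrix `γ(x)`. -/
def cmat (t : ℕ) (x : F) : Matrix (Fin 7) (Fin 7) F :=
  !![1, 0, 0, -x^t, 0, -x, -x^(2*t);
     0, 1, 0, 0, -x^t, 0, x;
     0, 0, 1, 0, 0, x^t, 0;
     0, 0, 0, 1, 0, 0, -x^t;
     0, 0, 0, 0, 1, 0, 0;
     0, 0, 0, 0, 0, 1, 0;
     0, 0, 0, 0, 0, 0, 1]

/-- The diagonal matrix `h(λ)`. -/
def hmat (t : ℕ) (l : Fˣ) : Matrix (Fin 7) (Fin 7) F :=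
  Matrix.diagonal ![((l ^ (t : ℤ) : Fˣ) : F), ((l ^ (1 - (t : ℤ)) : Fˣ) : F),
    ((l ^ (2 * (t : ℤ) - 1) : Fˣ) : F), 1, ((l ^ (1 - 2 * (t : ℤ)) : Fˣ) : F),
    ((l ^ ((t : ℤ) - 1) : Fˣ) : F), ((l ^ (-(t : ℤ)) : Fˣ) : F)]

/-- The matrix `Υ`, the antidiagonal matrix with all entries `-1`. -/
def ups : Matrix (Fin 7) (Fin 7) F :=
  !![0, 0, 0, 0, 0, 0, -1;
     0, 0, 0, 0, 0, -1, 0;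
     0, 0, 0, 0, -1, 0, 0;
     0, 0, 0, -1, 0, 0, 0;
     0, 0, -1, 0, 0, 0, 0;
     0, -1, 0, 0, 0, 0, 0;
     -1, 0, 0, 0, 0, 0, 0]

/-- `S(a, b, c) = α(a) β(b) γ(c)`. -/
def Smat (t : ℕ) (a b c : F) : Matrix (Fin 7) (Fin 7) F :=
  amat t a * bmat t b * cmat t c

/-- The Ree group `Ree(q) = ⟨α(x), β(x), γ(x), h(λ), Υ⟩ ≤ GL(7, q)`. -/
def ReeGroup (t : ℕ) : Subgroup (GL (Fin 7) F) :=
  Subgroup.closure {g : GL (Fin 7) F |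
    (∃ x : F, (g : Matrix (Fin 7) (Fin 7) F) = amat t x) ∨
    (∃ x : F, (g : Matrix (Fin 7) (Fin 7) F) = bmat t x) ∨
    (∃ x : F, (g : Matrix (Fin 7) (Fin 7) F) = cmat t x) ∨
    (∃ l : Fˣ, (g : Matrix (Fin 7) (Fin 7) F) = hmat t l) ∨
    (g : Matrix (Fin 7) (Fin 7) F) = ups}

/-- The subgroup `U(q) = ⟨α(x), β(x), γ(x)⟩`. -/
def Usub (t : ℕ) : Subgroup (GL (Fin 7) F) :=
  Subgroup.closure {g : GL (Fin 7) F |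
    (∃ x : F, (g : Matrix (Fin 7) (Fin 7) F) = amat t x) ∨
    (∃ x : F, (g : Matrix (Fin 7) (Fin 7) F) = bmat t x) ∨
    (∃ x : F, (g : Matrix (Fin 7) (Fin 7) F) = cmat t x)}

/-- The subgroup `H(q) = {h(λ) : λ ∈ F_q^×}`. -/
def Hsub (t : ℕ) : Subgroup (GL (Fin 7) F) :=
  Subgroup.closure {g : GL (Fin 7) F |
    ∃ l : Fˣ, (g : Matrix (Fin 7) (Fin 7) F) = hmat t l}

end ReePaper

open ReePaper

/-!
Over a field of order `3 ^ (2 * m + 1)` the split Cayley hexagon has a polarity, induced by a square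
root `s` of the Frobenius map, and `Ree(q)` lies in the centraliser `G` of this polarity. So `G`
acts on the absolute points, those incident with their polar line. Explicit elimination shows that
`U(q)` is transitive on the absolute points other than `⟨e₆⟩`. As a unitriangular element of `G`
fixing `⟨e₀⟩` is trivial, the action is regular, and `U(q)` is the group of all unitriangular
elements of `G`. If `g` in `G` conjugates a nontrivial `v` of `U(q)` into `U(q)`, then `v` fixes the
absolute point `⟨e₆ g⟩`, which must therefore be `⟨e₆⟩`. Hence `g` is upper triangular and
normalises `U(q)`.

For a 3-group `Q` in `G` containing `U(q)`, a nontrivial central element of `Q` first lies in `U(q)`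
and then forces `Q` to normalise `U(q)`. So `Q` is upper triangular, and elements of 3-power order
have ones on the diagonal.
-/

namespace ReePaper

section TISubgroups

variable {G : Type*} [Group G] {U K : Subgroup G}

/-- `U` is a trivial intersection subgroup relative to `K`: an element of `K` that conjugates some
nontrivial element of `U` into `U` normalises `U`. -/
def IsTISubgroup (U K : Subgroup G) : Prop :=
  ∀ ⦃g⦄, g ∈ K → ∀ ⦃v⦄, v ∈ U → v ≠ 1 → g * v * g⁻¹ ∈ U → g ∈ Subgroup.normalizer (U : Set G)

theorem IsTISubgroup.map_conj_inf_map_conj (hU : IsTISubgroup U K) {g₁ g₂ : G} (hg₁ : g₁ ∈ K)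
    (hg₂ : g₂ ∈ K)
    (hne : U.map (MulAut.conj g₁).toMonoidHom ≠ U.map (MulAut.conj g₂).toMonoidHom) :
    U.map (MulAut.conj g₁).toMonoidHom ⊓ U.map (MulAut.conj g₂).toMonoidHom = ⊥ := by
  rw [Subgroup.eq_bot_iff_forall]
  rintro _ ⟨⟨u, hu, rfl⟩, v, hv, hvu⟩
  simp only [MulEquiv.coe_toMonoidHom, MulAut.conj_apply] at hvu ⊢
  by_contra hne_one
  have hconj : g₁⁻¹ * g₂ * v * (g₁⁻¹ * g₂)⁻¹ = u := by
    rw [← mul_left_cancel_iff (a := g₁), ← mul_right_cancel_iff (a := g₁⁻¹), ← hvu]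
    group
  have hv_ne : v ≠ 1 := by
    rintro rfl
    simp [← hvu] at hne_one
  have hnorm := hU (mul_mem (inv_mem hg₁) hg₂) hv hv_ne (hconj ▸ hu)
  rw [Subgroup.mem_normalizer_iff_map_conj_eq] at hnorm
  refine hne ?_
  conv_lhs => rw [← hnorm, Subgroup.map_map]
  congr 1
  ext x
  simp [mul_assoc]

theorem IsTISubgroup.eq_of_isPGroup {p : ℕ} [Fact p.Prime] (hU : IsTISubgroup U K) (hbot : U ≠ ⊥)
    (hnorm : ∀ g ∈ K, g ∈ Subgroup.normalizer (U : Set G) → (∃ k : ℕ, g ^ p ^ k = 1) → g ∈ U)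
    {Q : Subgroup G} [Finite Q] (hQK : Q ≤ K) (hQ : IsPGroup p Q) (hUQ : U ≤ Q) : Q = U := by
  have mem_of_normalizes {g : G} (hg : g ∈ Q) (hgU : g ∈ Subgroup.normalizer (U : Set G)) :
      g ∈ U := by
    obtain ⟨k, hk⟩ := hQ ⟨g, hg⟩
    exact hnorm g (hQK hg) hgU ⟨k, congrArg Subtype.val hk⟩
  obtain ⟨u, hu, hu_ne⟩ := U.bot_or_exists_ne_one.resolve_left hbot
  have : Nontrivial Q := ⟨⟨u, hUQ hu⟩, 1, fun h => hu_ne (congrArg Subtype.val h)⟩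
  have := hQ.center_nontrivial
  obtain ⟨⟨⟨z, hzQ⟩, hz⟩, hz_ne⟩ := exists_ne (1 : Subgroup.center Q)
  have conj_z {g : G} (hg : g ∈ Q) : g * z * g⁻¹ = z :=
    mul_inv_eq_of_eq_mul (congrArg Subtype.val (Subgroup.mem_center_iff.1 hz ⟨g, hg⟩))
  have conj_by_z {g : G} (hg : g ∈ Q) : z * g * z⁻¹ = g :=
    mul_inv_eq_of_eq_mul (congrArg Subtype.val (Subgroup.mem_center_iff.1 hz ⟨g, hg⟩)).symm
  have hzU : z ∈ U :=
    mem_of_normalizes hzQ (hU (hQK hzQ) hu hu_ne ((conj_by_z (hUQ hu)).symm ▸ hu))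
  have hz_ne' : z ≠ 1 := fun h => hz_ne (Subtype.ext (Subtype.ext h))
  refine le_antisymm (fun g hg => ?_) hUQ
  exact mem_of_normalizes hg (hU (hQK hg) hzU hz_ne' ((conj_z hg).symm ▸ hzU))

end TISubgroups

section Triangular

variable {n R : Type*} [LinearOrder n] [CommRing R]

/-- `A` is upper triangular with ones on the diagonal. -/
def IsUnitriangular (A : Matrix n n R) : Prop :=
  A.IsUpperTriangular ∧ ∀ i, A i i = 1

theorem IsUnitriangular.row_eq_single {A : Matrix n n R} (hA : IsUnitriangular A) {i : n}
    (hi : ∀ j, j ≤ i) : A i = Pi.single i 1 := by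
  ext j
  rcases (hi j).eq_or_lt with rfl | hj
  · rw [hA.2, Pi.single_eq_same]
  · rw [hA.1 hj, Pi.single_eq_of_ne hj.ne]

variable [Fintype n]

theorem IsUnitriangular.exists_val_eq {A : Matrix n n R} (hA : IsUnitriangular A) :
    ∃ g : GL n R, (g : Matrix n n R) = A :=
  ⟨GeneralLinearGroup.mk'' A (by simp [det_of_isUpperTriangular hA.1, hA.2]), rfl⟩

theorem mul_diag_of_isUpperTriangular {A B : Matrix n n R} (hA : A.IsUpperTriangular)
    (hB : B.IsUpperTriangular) (i : n) : (A * B) i i = A i i * B i i := by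
  rw [mul_apply, Finset.sum_eq_single i _ (by simp)]
  intro j _ hji
  rcases hji.lt_or_gt with h | h
  · rw [hA h, zero_mul]
  · rw [hB h, mul_zero]

variable (n R)

/-- The group of invertible upper triangular matrices. -/
def upperTriangular : Subgroup (GL n R) where
  carrier := {g | (g : Matrix n n R).IsUpperTriangular}
  one_mem' := blockTriangular_one
  mul_mem' := BlockTriangular.mul
  inv_mem' {g} hg := by
    have := g.invertible
    simpa only [Set.mem_ofPred_eq, coe_units_inv] using
      blockTriangular_inv_of_blockTriangular hg

/-- The homomorphism sending an upper triangular matrix to its diagonal. -/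
def diagHom : upperTriangular n R →* (n → R) where
  toFun g := (g.1 : Matrix n n R).diag
  map_one' := by simp
  map_mul' g h := funext (mul_diag_of_isUpperTriangular g.2 h.2)

variable {n R} in
@[simp]
theorem diagHom_apply (g : upperTriangular n R) (i : n) :
    diagHom n R g i = (g.1 : Matrix n n R) i i := rfl

/-- The group of upper triangular matrices with ones on the diagonal. -/
def unitriangular : Subgroup (GL n R) :=
  (diagHom n R).ker.map (upperTriangular n R).subtype

variable {n R}

theorem mem_upperTriangular {g : GL n R} :
    g ∈ upperTriangular n R ↔ (g : Matrix n n R).IsUpperTriangular := Iff.rfl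

theorem mem_unitriangular {g : GL n R} :
    g ∈ unitriangular n R ↔ IsUnitriangular (g : Matrix n n R) := by
  simp [IsUnitriangular, mem_upperTriangular, unitriangular, MonoidHom.mem_ker, funext_iff,
    and_comm]

theorem upperTriangular_le_normalizer_unitriangular :
    upperTriangular n R ≤ Subgroup.normalizer (unitriangular n R : Set (GL n R)) := by
  have h := Subgroup.le_normalizer_map (H := (diagHom n R).ker) (upperTriangular n R).subtype
  rwa [Subgroup.normalizer_eq_top, ← MonoidHom.range_eq_map, Subgroup.range_subtype] at h

theorem mem_unitriangular_of_pow_eq_one [IsReduced R] {p : ℕ} [Fact p.Prime] [CharP R p]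
    {g : GL n R} (hg : g ∈ upperTriangular n R) {k : ℕ} (hk : g ^ p ^ k = 1) :
    g ∈ unitriangular n R := by
  refine mem_unitriangular.2 ⟨hg, fun i => ?_⟩
  have hdiag : diagHom n R ⟨g, hg⟩ ^ p ^ k = 1 := by
    rw [← map_pow, (Subtype.ext hk : (⟨g, hg⟩ : upperTriangular n R) ^ p ^ k = 1), map_one]
  refine iterateFrobenius_inj R p k ?_
  simpa [iterateFrobenius_def] using congrFun hdiag i

theorem isPGroup_unitriangular (p : ℕ) [Fact p.Prime] [CharP R p] :
    IsPGroup p (unitriangular n R) := by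
  rintro ⟨g, hg⟩
  cases isEmpty_or_nonempty n
  · exact ⟨0, Subsingleton.elim _ _⟩
  obtain ⟨hupper, hdiag⟩ := mem_unitriangular.1 hg
  obtain ⟨k, hk⟩ : ∃ k, Fintype.card n ≤ p ^ k :=
    ⟨_, (Nat.lt_pow_self (Fact.out : p.Prime).one_lt).le⟩
  have hnil : ((g : Matrix n n R) - 1) ^ Fintype.card n = 0 := by
    have h := aeval_self_charpoly (g : Matrix n n R)
    rw [charpoly_of_isUpperTriangular _ hupper] at h
    simpa [hdiag] using h
  refine ⟨k, Subtype.ext (Units.ext ?_)⟩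
  simp only [Subgroup.coe_pow, Units.val_pow_eq_pow_val, Subgroup.coe_one, Units.val_one]
  have h := sub_pow_char_pow_of_commute p (Commute.one_right (g : Matrix n n R)) (n := k)
  rw [pow_eq_zero_of_le hk hnil, one_pow] at h
  exact (sub_eq_zero.1 h.symm)

end Triangular

variable {F : Type*} [Field F]

section SplitCayleyHexagon

/-- The product of imaginary octonions on `F⁷`: two points of the quadric
`p₀p₆ + p₁p₅ + p₂p₄ + p₃² = 0` span a line of the split Cayley hexagon iff it vanishes. -/
def cross (p q : Fin 7 → F) : Fin 7 → F :=
  ![-(p 0 * q 3 - p 3 * q 0) + (p 1 * q 2 - p 2 * q 1),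
    (p 0 * q 4 - p 4 * q 0) + (p 1 * q 3 - p 3 * q 1),
    -(p 0 * q 5 - p 5 * q 0) + (p 2 * q 3 - p 3 * q 2),
    -(p 0 * q 6 - p 6 * q 0) + (p 1 * q 5 - p 5 * q 1) + (p 2 * q 4 - p 4 * q 2),
    -(p 1 * q 6 - p 6 * q 1) + (p 3 * q 4 - p 4 * q 3),
    (p 2 * q 6 - p 6 * q 2) + (p 3 * q 5 - p 5 * q 3),
    -(p 3 * q 6 - p 6 * q 3) + (p 4 * q 5 - p 5 * q 4)]

/-- The seven Grassmann coordinates of the hexagon line through `p` and `q` that, in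
characteristic 3, identify the hexagon with its dual. -/
def lineCoord (p q : Fin 7 → F) : Fin 7 → F :=
  ![p 0 * q 1 - p 1 * q 0,
    p 0 * q 2 - p 2 * q 0,
    -(p 1 * q 4 - p 4 * q 1),
    -(p 1 * q 5 - p 5 * q 1) + (p 2 * q 4 - p 4 * q 2),
    -(p 2 * q 5 - p 5 * q 2),
    p 4 * q 6 - p 6 * q 4,
    p 5 * q 6 - p 6 * q 5]

/-- A matrix commutes with the polarity `p ↦ s ∘ p` of the hexagon if it preserves the octonion
product and acts on line coordinates as its image under `s` acts on points. -/
structure CommutesWithPolarity (s : F →+* F) (M : Matrix (Fin 7) (Fin 7) F) : Prop where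
  cross_vecMul : ∀ p q, cross (p ᵥ* M) (q ᵥ* M) = cross p q ᵥ* M
  lineCoord_vecMul : ∀ p q, cross p q = 0 →
    lineCoord (p ᵥ* M) (q ᵥ* M) = lineCoord p q ᵥ* M.map s

/-- The centraliser of the polarity `p ↦ s ∘ p` in the automorphism group of the octonions. -/
def polarityGroup (s : F →+* F) : Subgroup (GL (Fin 7) F) where
  carrier := {g | CommutesWithPolarity s g}
  one_mem' := by constructor <;> simp
  mul_mem' {g h} hg hh := by
    constructor
    · intro p q
      simp only [Units.val_mul, ← vecMul_vecMul, hh.cross_vecMul, hg.cross_vecMul]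
    · intro p q hpq
      have hpq' : cross (p ᵥ* g) (q ᵥ* g) = 0 := by rw [hg.cross_vecMul, hpq, zero_vecMul]
      simp only [Units.val_mul, ← vecMul_vecMul, Matrix.map_mul,
        hh.lineCoord_vecMul _ _ hpq', hg.lineCoord_vecMul p q hpq]
  inv_mem' {g} hg := by
    have cancel (p : Fin 7 → F) : (p ᵥ* (g⁻¹).1) ᵥ* g.1 = p := by
      rw [vecMul_vecMul, Units.inv_mul, vecMul_one]
    have cross_inv (p q : Fin 7 → F) :
        cross (p ᵥ* (g⁻¹).1) (q ᵥ* (g⁻¹).1) = cross p q ᵥ* (g⁻¹).1 := by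
      rw [← cancel p, ← cancel q, hg.cross_vecMul]
      simp only [cancel, vecMul_vecMul, Units.mul_inv, vecMul_one]
    refine ⟨cross_inv, fun p q hpq => ?_⟩
    have hpq' : cross (p ᵥ* (g⁻¹).1) (q ᵥ* (g⁻¹).1) = 0 := by rw [cross_inv, hpq, zero_vecMul]
    have hmap : g.1.map s * (g⁻¹).1.map s = 1 := by
      rw [← Matrix.map_mul, Units.mul_inv, Matrix.map_one _ s.map_zero s.map_one]
    have h := hg.lineCoord_vecMul _ _ hpq'
    rw [cancel, cancel] at h
    rw [h, vecMul_vecMul, hmap, vecMul_one]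

/-- `p` is an absolute point of the polarity `p ↦ s ∘ p`, and its polar line, which then passes
through `p`, is the line joining `p` and `q`. -/
def IsAbsoluteFlag (s : F →+* F) (p q : Fin 7 → F) : Prop :=
  cross p q = 0 ∧ lineCoord p q = s ∘ p

theorem CommutesWithPolarity.isAbsoluteFlag_vecMul {s : F →+* F} {M : Matrix (Fin 7) (Fin 7) F}
    (hM : CommutesWithPolarity s M) {p q : Fin 7 → F} (h : IsAbsoluteFlag s p q) :
    IsAbsoluteFlag s (p ᵥ* M) (q ᵥ* M) := by
  refine ⟨by rw [hM.cross_vecMul, h.1, zero_vecMul], ?_⟩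
  rw [hM.lineCoord_vecMul p q h.1, h.2]
  ext i
  exact (s.map_vecMul M p i).symm

theorem cross_eq_zero_iff {p q : Fin 7 → F} : cross p q = 0 ↔
    -(p 0 * q 3 - p 3 * q 0) + (p 1 * q 2 - p 2 * q 1) = 0 ∧
    (p 0 * q 4 - p 4 * q 0) + (p 1 * q 3 - p 3 * q 1) = 0 ∧
    -(p 0 * q 5 - p 5 * q 0) + (p 2 * q 3 - p 3 * q 2) = 0 ∧
    -(p 0 * q 6 - p 6 * q 0) + (p 1 * q 5 - p 5 * q 1) + (p 2 * q 4 - p 4 * q 2) = 0 ∧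
    -(p 1 * q 6 - p 6 * q 1) + (p 3 * q 4 - p 4 * q 3) = 0 ∧
    (p 2 * q 6 - p 6 * q 2) + (p 3 * q 5 - p 5 * q 3) = 0 ∧
    -(p 3 * q 6 - p 6 * q 3) + (p 4 * q 5 - p 5 * q 4) = 0 := by
  simp only [funext_iff, Fin.forall_fin_succ, cross]
  simp

theorem lineCoord_eq_iff {p q r : Fin 7 → F} : lineCoord p q = r ↔
    p 0 * q 1 - p 1 * q 0 = r 0 ∧
    p 0 * q 2 - p 2 * q 0 = r 1 ∧
    -(p 1 * q 4 - p 4 * q 1) = r 2 ∧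
    -(p 1 * q 5 - p 5 * q 1) + (p 2 * q 4 - p 4 * q 2) = r 3 ∧
    -(p 2 * q 5 - p 5 * q 2) = r 4 ∧
    p 4 * q 6 - p 6 * q 4 = r 5 ∧
    p 5 * q 6 - p 6 * q 5 = r 6 := by
  simp only [funext_iff, Fin.forall_fin_succ, lineCoord]
  simp

end SplitCayleyHexagon

section Generators

theorem amat_vecMul (t : ℕ) (x : F) (p : Fin 7 → F) :
    p ᵥ* amat t x = ![p 0, p 0 * x ^ t + p 1, p 1 * x + p 2,
      p 1 * (x ^ t * x) + p 2 * x ^ t + p 3,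
      -p 0 * ((x ^ t) ^ 3 * x) - p 1 * ((x ^ t) ^ 2 * x) - p 2 * (x ^ t) ^ 2 + p 3 * x ^ t + p 4,
      -p 0 * ((x ^ t) ^ 3 * x ^ 2) - p 4 * x + p 5,
      p 0 * ((x ^ t) ^ 4 * x ^ 2) - p 1 * ((x ^ t) ^ 3 * x ^ 2) + p 2 * ((x ^ t) ^ 3 * x)
        + p 4 * (x ^ t * x) - p 5 * x ^ t + p 6] := by
  ext i
  fin_cases i <;> simp [vecMul, dotProduct, Fin.sum_univ_succ, amat] <;> ring

theorem bmat_vecMul (t : ℕ) (x : F) (p : Fin 7 → F) :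
    p ᵥ* bmat t x = ![p 0, p 1, -p 0 * x ^ t + p 2, p 1 * x ^ t + p 3, -p 0 * x + p 4,
      -p 1 * (x ^ t) ^ 2 + p 3 * x ^ t + p 5,
      -p 0 * (x ^ t * x) + p 2 * x + p 4 * x ^ t + p 6] := by
  ext i
  fin_cases i <;> simp [vecMul, dotProduct, Fin.sum_univ_succ, bmat] <;> ring

theorem cmat_vecMul (t : ℕ) (x : F) (p : Fin 7 → F) :
    p ᵥ* cmat t x = ![p 0, p 1, p 2, -p 0 * x ^ t + p 3, -p 1 * x ^ t + p 4,
      -p 0 * x + p 2 * x ^ t + p 5,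
      -p 0 * (x ^ t) ^ 2 + p 1 * x - p 3 * x ^ t + p 6] := by
  ext i
  fin_cases i <;> simp [vecMul, dotProduct, Fin.sum_univ_succ, cmat] <;> ring

theorem hmat_vecMul (t : ℕ) (l : Fˣ) (p : Fin 7 → F) :
    p ᵥ* hmat t l = ![p 0 * (l : F) ^ t, p 1 * (l / (l : F) ^ t), p 2 * (((l : F) ^ t) ^ 2 / l),
      p 3, p 4 * (l / ((l : F) ^ t) ^ 2), p 5 * ((l : F) ^ t / l), p 6 * ((l : F) ^ t)⁻¹] := by
  have hpow : (l : F) ^ ((t : ℤ) * 2) = ((l : F) ^ t) ^ 2 := by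
    rw [_root_.zpow_mul]
    norm_cast
  ext i
  fin_cases i <;> simp [hmat, vecMul_diagonal, zpow_sub₀ l.ne_zero, mul_comm (2 : ℤ), hpow]

theorem ups_vecMul (p : Fin 7 → F) :
    p ᵥ* ups = ![-p 6, -p 5, -p 4, -p 3, -p 2, -p 1, -p 0] := by
  ext i
  fin_cases i <;> simp [vecMul, dotProduct, Fin.sum_univ_succ, ups]

theorem map_amat (s : F →+* F) (t : ℕ) (x : F) : (amat t x).map s = amat t (s x) := by
  ext i j
  fin_cases i <;> fin_cases j <;> simp [amat]

theorem map_bmat (s : F →+* F) (t : ℕ) (x : F) : (bmat t x).map s = bmat t (s x) := by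
  ext i j
  fin_cases i <;> fin_cases j <;> simp [bmat]

theorem map_cmat (s : F →+* F) (t : ℕ) (x : F) : (cmat t x).map s = cmat t (s x) := by
  ext i j
  fin_cases i <;> fin_cases j <;> simp [cmat]

theorem map_hmat (s : F →+* F) (t : ℕ) (l : Fˣ) :
    (hmat t l).map s = hmat t (Units.map (s : F →* F) l) := by
  simp only [hmat, diagonal_map s.map_zero]
  congr 1
  ext i
  fin_cases i <;> simp

theorem map_ups (s : F →+* F) : (ups : Matrix (Fin 7) (Fin 7) F).map s = ups := by
  ext i j
  fin_cases i <;> fin_cases j <;> simp [ups]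

/-- `s` is a Tits endomorphism, squaring to the Frobenius map `x ↦ x ^ 3`, and its inverse is
`x ↦ x ^ t`. -/
structure IsTitsEndomorphism (s : F →+* F) (t : ℕ) : Prop where
  map_map : ∀ x, s (s x) = x ^ 3
  map_pow : ∀ x, s (x ^ t) = x

namespace IsTitsEndomorphism

variable {s : F →+* F} {t : ℕ} (hs : IsTitsEndomorphism s t)
include hs

theorem apply_eq (x : F) : s x = (x ^ t) ^ 3 := by
  rw [← hs.map_map, hs.map_pow]

theorem apply_pow (x : F) : s x ^ t = x :=
  s.injective (hs.map_pow (s x))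

end IsTitsEndomorphism

variable {s : F →+* F} {t : ℕ}

theorem commutesWithPolarity_ups : CommutesWithPolarity s (ups : Matrix (Fin 7) (Fin 7) F) := by
  constructor
  · intro p q
    simp only [ups_vecMul]
    ext i
    fin_cases i <;> simp [cross] <;> ring
  · intro p q _
    simp only [map_ups, ups_vecMul]
    ext i
    fin_cases i <;> simp [lineCoord]
    ring

theorem commutesWithPolarity_hmat (hs : IsTitsEndomorphism s t) (l : Fˣ) :
    CommutesWithPolarity s (hmat t l) := by
  have hl : (l : F) ≠ 0 := l.ne_zero
  have hlt : (l : F) ^ t ≠ 0 := pow_ne_zero t hl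
  constructor
  · intro p q
    simp only [hmat_vecMul]
    generalize (l : F) ^ t = y at hlt
    ext i
    fin_cases i <;> simp [cross] <;> field_simp
  · intro p q _
    simp only [map_hmat, hmat_vecMul, Units.coe_map, MonoidHom.coe_coe, hs.apply_pow]
    simp only [hs.apply_eq]
    generalize (l : F) ^ t = y at hlt
    ext i
    fin_cases i <;> simp [lineCoord] <;> field_simp

variable [CharP F 3]

theorem commutesWithPolarity_amat (hs : IsTitsEndomorphism s t) (x : F) :
    CommutesWithPolarity s (amat t x) := by
  constructor
  · intro p q
    simp only [amat_vecMul]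
    generalize x ^ t = y
    ext i
    fin_cases i <;> simp [cross] <;> linear_combination (norm := ring_nf <;> reduce_mod_char!)
  · intro p q hpq
    obtain ⟨h0, h1, h2, h3, h4, h5, h6⟩ := cross_eq_zero_iff.1 hpq
    simp only [map_amat, amat_vecMul, hs.apply_pow]
    simp only [hs.apply_eq]
    generalize x ^ t = y
    ext i
    fin_cases i <;> simp [lineCoord]
    · linear_combination
    · linear_combination
    · linear_combination y ^ 2 * h0 - y * h1
    · linear_combination (norm := (ring_nf; reduce_mod_char!)) x * y * h1 + y * h2
    · linear_combination
    · linear_combination (norm := (ring_nf; reduce_mod_char!)) x ^ 2 * y ^ 5 * h0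
        + x ^ 2 * y ^ 4 * h1 - x * y ^ 4 * h2 + x * y ^ 3 * h3 + x * y ^ 2 * h4 - y ^ 2 * h5
        - y * h6
    · linear_combination x ^ 2 * y ^ 3 * h3

theorem commutesWithPolarity_bmat (hs : IsTitsEndomorphism s t) (x : F) :
    CommutesWithPolarity s (bmat t x) := by
  constructor
  · intro p q
    simp only [bmat_vecMul]
    generalize x ^ t = y
    ext i
    fin_cases i <;> simp [cross] <;> linear_combination (norm := ring_nf <;> reduce_mod_char!)
  · intro p q hpq
    obtain ⟨h0, h1, h2, h3, h4, -, h6⟩ := cross_eq_zero_iff.1 hpq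
    simp only [map_bmat, bmat_vecMul, hs.apply_pow]
    simp only [hs.apply_eq]
    generalize x ^ t = y
    ext i
    fin_cases i <;> simp [lineCoord]
    · linear_combination
    · linear_combination
    · linear_combination -y * h1
    · linear_combination -y ^ 2 * h0 - y * h2
    · linear_combination (norm := (ring_nf; reduce_mod_char!)) x * h3
    · linear_combination -x * y ^ 2 * h0 - x * y * h2
        + y ^ 2 * h4 - y * h6

theorem commutesWithPolarity_cmat (hs : IsTitsEndomorphism s t) (x : F) :
    CommutesWithPolarity s (cmat t x) := by
  constructor
  · intro p q
    simp only [cmat_vecMul]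
    generalize x ^ t = y
    ext i
    fin_cases i <;> simp [cross] <;> linear_combination (norm := ring_nf <;> reduce_mod_char!)
  · intro p q hpq
    obtain ⟨h0, h1, h2, h3, h4, h5, -⟩ := cross_eq_zero_iff.1 hpq
    simp only [map_cmat, cmat_vecMul, hs.apply_pow]
    simp only [hs.apply_eq]
    generalize x ^ t = y
    ext i
    fin_cases i <;> simp [lineCoord]
    · linear_combination
    · linear_combination
    · linear_combination
    · linear_combination y ^ 2 * h1 + y * h4
    · linear_combination (norm := (ring_nf; reduce_mod_char!)) -x * y * h0 - y ^ 2 * h2 + x * h3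
        + y * h5

theorem reeGroup_le_polarityGroup (hs : IsTitsEndomorphism s t) :
    ReeGroup t ≤ polarityGroup s := by
  rw [ReeGroup, Subgroup.closure_le]
  rintro g (⟨x, hg⟩ | ⟨x, hg⟩ | ⟨x, hg⟩ | ⟨l, hg⟩ | hg) <;>
    change CommutesWithPolarity s g.1 <;> rw [hg]
  · exact commutesWithPolarity_amat hs x
  · exact commutesWithPolarity_bmat hs x
  · exact commutesWithPolarity_cmat hs x
  · exact commutesWithPolarity_hmat hs l
  · exact commutesWithPolarity_ups

end Generators

section Unipotent

theorem usub_le_reeGroup (t : ℕ) : (Usub t : Subgroup (GL (Fin 7) F)) ≤ ReeGroup t :=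
  Subgroup.closure_mono fun _ => Or.imp_right (Or.imp_right Or.inl)

theorem isUnitriangular_amat (t : ℕ) (x : F) : IsUnitriangular (amat t x) := by
  refine ⟨fun i j hij => ?_, fun i => ?_⟩
  · fin_cases i <;> fin_cases j <;> simp_all [amat]
  · fin_cases i <;> simp [amat]

theorem isUnitriangular_bmat (t : ℕ) (x : F) : IsUnitriangular (bmat t x) := by
  refine ⟨fun i j hij => ?_, fun i => ?_⟩
  · fin_cases i <;> fin_cases j <;> simp_all [bmat]
  · fin_cases i <;> simp [bmat]

theorem isUnitriangular_cmat (t : ℕ) (x : F) : IsUnitriangular (cmat t x) := by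
  refine ⟨fun i j hij => ?_, fun i => ?_⟩
  · fin_cases i <;> fin_cases j <;> simp_all [cmat]
  · fin_cases i <;> simp [cmat]

theorem usub_le_unitriangular (t : ℕ) :
    (Usub t : Subgroup (GL (Fin 7) F)) ≤ unitriangular (Fin 7) F := by
  rw [Usub, Subgroup.closure_le]
  rintro g (⟨x, hg⟩ | ⟨x, hg⟩ | ⟨x, hg⟩) <;> rw [SetLike.mem_coe, mem_unitriangular, hg]
  exacts [isUnitriangular_amat t x, isUnitriangular_bmat t x, isUnitriangular_cmat t x]

theorem exists_mem_usub_val_eq_smat (t : ℕ) (a b c : F) :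
    ∃ u ∈ (Usub t : Subgroup (GL (Fin 7) F)), (u : Matrix (Fin 7) (Fin 7) F) = Smat t a b c := by
  obtain ⟨u, hu⟩ := (isUnitriangular_amat t a).exists_val_eq
  obtain ⟨v, hv⟩ := (isUnitriangular_bmat t b).exists_val_eq
  obtain ⟨w, hw⟩ := (isUnitriangular_cmat t c).exists_val_eq
  have huU : u ∈ Usub t := Subgroup.subset_closure (Or.inl ⟨a, hu⟩)
  have hvU : v ∈ Usub t := Subgroup.subset_closure (Or.inr (Or.inl ⟨b, hv⟩))
  have hwU : w ∈ Usub t := Subgroup.subset_closure (Or.inr (Or.inr ⟨c, hw⟩))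
  exact ⟨u * v * w, mul_mem (mul_mem huU hvU) hwU, by simp only [Units.val_mul, hu, hv, hw, Smat]⟩

theorem usub_ne_bot (t : ℕ) : (Usub t : Subgroup (GL (Fin 7) F)) ≠ ⊥ := by
  obtain ⟨u, hu⟩ := (isUnitriangular_cmat t (1 : F)).exists_val_eq
  have huU : u ∈ Usub t := Subgroup.subset_closure (Or.inr (Or.inr ⟨1, hu⟩))
  have hu_ne : u ≠ 1 := by
    rintro rfl
    simpa [cmat] using congrArg (· 2 5) hu
  exact fun h => hu_ne (by rwa [h, Subgroup.mem_bot] at huU)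

end Unipotent

section AbsoluteFlags

variable {s : F →+* F} {p q : Fin 7 → F}

theorem eq_zero_of_map_mul_pow_eq_zero {a : F} {k : ℕ} (h : s a * a ^ k = 0) : a = 0 :=
  (mul_eq_zero.1 h).elim (map_eq_zero s).1 eq_zero_of_pow_eq_zero

theorem isAbsoluteFlag_single_zero : IsAbsoluteFlag s (Pi.single 0 1) (Pi.single 1 1) := by
  simp [IsAbsoluteFlag, cross_eq_zero_iff, lineCoord_eq_iff]

theorem isAbsoluteFlag_single_six : IsAbsoluteFlag s (Pi.single 6 1) (-Pi.single 5 1) := by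
  simp [IsAbsoluteFlag, cross_eq_zero_iff, lineCoord_eq_iff]

theorem IsAbsoluteFlag.eq_single_six (h : IsAbsoluteFlag s p q) (h0 : p 0 = 0) :
    p = Pi.single 6 (p 6) := by
  obtain ⟨hc, hl⟩ := h
  rw [cross_eq_zero_iff] at hc
  simp only [lineCoord_eq_iff, Function.comp_apply] at hl
  have hs := map_zero s
  have h1 : p 1 = 0 := eq_zero_of_map_mul_pow_eq_zero (show s (p 1) * p 1 ^ 1 = 0 by grind)
  have h2 : p 2 = 0 := eq_zero_of_map_mul_pow_eq_zero (show s (p 2) * p 2 ^ 2 = 0 by grind)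
  have h3 : p 3 = 0 := eq_zero_of_map_mul_pow_eq_zero (show s (p 3) * p 3 ^ 2 = 0 by grind)
  have h4 : p 4 = 0 := eq_zero_of_map_mul_pow_eq_zero (show s (p 4) * p 4 ^ 2 = 0 by grind)
  have h5 : p 5 = 0 := eq_zero_of_map_mul_pow_eq_zero (show s (p 5) * p 5 ^ 3 = 0 by grind)
  ext i
  fin_cases i <;> simp [h0, h1, h2, h3, h4, h5]

theorem IsAbsoluteFlag.eq_single_zero (h : IsAbsoluteFlag s p q) (h0 : p 0 ≠ 0) (h1 : p 1 = 0)
    (h2 : p 2 = 0) (h3 : p 3 = 0) : p = Pi.single 0 (p 0) := by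
  obtain ⟨hc, hl⟩ := h
  simp only [cross_eq_zero_iff, h1, h2, h3, zero_mul] at hc
  simp only [lineCoord_eq_iff, Function.comp_apply, h1, h2, h3, zero_mul, map_zero] at hl
  obtain ⟨-, -, c2, -⟩ := hc
  obtain ⟨l0, -, l2, l3, -, -, l6⟩ := hl
  have hq1 : q 1 ≠ 0 := by
    refine right_ne_zero_of_mul (a := p 0) ?_
    rwa [← sub_zero (p 0 * q 1), l0, map_ne_zero]
  have h4 : p 4 = 0 := by simpa [hq1] using l2
  have h5 : p 5 = 0 := by simpa [hq1, h4] using l3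
  have hq5 : q 5 = 0 := by simpa [h0, h5] using c2
  have h6 : p 6 = 0 := by
    rw [← map_eq_zero s, ← l6, h5, hq5]
    ring
  ext i
  fin_cases i <;> simp [h1, h2, h3, h4, h5, h6]

end AbsoluteFlags

section Triangularity

variable {s : F →+* F} {M : Matrix (Fin 7) (Fin 7) F}

theorem cross_single_six_eq_iff {p r : Fin 7 → F} {d : F} : cross p (Pi.single 6 d) = r ↔
    0 = r 0 ∧ 0 = r 1 ∧ 0 = r 2 ∧ -(p 0 * d) = r 3 ∧ -(p 1 * d) = r 4 ∧ p 2 * d = r 5 ∧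
    -(p 3 * d) = r 6 := by
  simp only [funext_iff, Fin.forall_fin_succ, cross]
  simp

theorem cross_single_zero_eq_iff {q r : Fin 7 → F} {c : F} : cross (Pi.single 0 c) q = r ↔
    -(c * q 3) = r 0 ∧ c * q 4 = r 1 ∧ -(c * q 5) = r 2 ∧ -(c * q 6) = r 3 ∧ 0 = r 4 ∧ 0 = r 5 ∧
    0 = r 6 := by
  simp only [funext_iff, Fin.forall_fin_succ, cross]
  simp

namespace CommutesWithPolarity

variable (hM : CommutesWithPolarity s M)
include hM

theorem cross_row (i j : Fin 7) :
    cross (M i) (M j) = cross (Pi.single i 1) (Pi.single j 1) ᵥ* M := by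
  simp only [← hM.cross_vecMul, single_one_vecMul, row_def]

theorem cross_row_six : cross (M 1) (M 6) = -M 4 ∧ cross (M 2) (M 6) = M 5 ∧
    cross (M 3) (M 6) = -M 6 ∧ cross (M 4) (M 6) = 0 := by
  have h1 : cross (F := F) (Pi.single 1 1) (Pi.single 6 1) = -Pi.single 4 1 := by
    simp [cross_single_six_eq_iff]
  have h2 : cross (F := F) (Pi.single 2 1) (Pi.single 6 1) = Pi.single 5 1 := by
    simp [cross_single_six_eq_iff]
  have h3 : cross (F := F) (Pi.single 3 1) (Pi.single 6 1) = -Pi.single 6 1 := by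
    simp [cross_single_six_eq_iff]
  have h4 : cross (F := F) (Pi.single 4 1) (Pi.single 6 1) = 0 := by
    simp [cross_single_six_eq_iff]
  simp [hM.cross_row, h1, h2, h3, h4, neg_vecMul, row_def]

theorem cross_row_zero : cross (M 0) (M 2) = 0 ∧ cross (M 0) (M 3) = -M 0 ∧
    cross (M 0) (M 4) = M 1 ∧ cross (M 0) (M 5) = -M 2 := by
  have h2 : cross (F := F) (Pi.single 0 1) (Pi.single 2 1) = 0 := by
    simp [cross_single_zero_eq_iff]
  have h3 : cross (F := F) (Pi.single 0 1) (Pi.single 3 1) = -Pi.single 0 1 := by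
    simp [cross_single_zero_eq_iff]
  have h4 : cross (F := F) (Pi.single 0 1) (Pi.single 4 1) = Pi.single 1 1 := by
    simp [cross_single_zero_eq_iff]
  have h5 : cross (F := F) (Pi.single 0 1) (Pi.single 5 1) = -Pi.single 2 1 := by
    simp [cross_single_zero_eq_iff]
  simp [hM.cross_row, h2, h3, h4, h5, neg_vecMul, row_def]

theorem isAbsoluteFlag_row_zero : IsAbsoluteFlag s (M 0) (M 1) := by
  have h := hM.isAbsoluteFlag_vecMul isAbsoluteFlag_single_zero
  rwa [single_one_vecMul, single_one_vecMul] at h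

theorem isAbsoluteFlag_row_six : IsAbsoluteFlag s (M 6) (-M 5) := by
  have h := hM.isAbsoluteFlag_vecMul isAbsoluteFlag_single_six
  rwa [neg_vecMul, single_one_vecMul, single_one_vecMul] at h

theorem isUpperTriangular {d : F} (h6 : M 6 = Pi.single 6 d) (hd : d ≠ 0) :
    M.IsUpperTriangular := by
  obtain ⟨e1, e2, e3, e4⟩ := hM.cross_row_six
  simp only [h6, cross_single_six_eq_iff] at e1 e2 e3 e4
  obtain ⟨h5, h54, -⟩ : (M 5 0 = 0 ∧ M 5 1 = 0 ∧ M 5 2 = 0 ∧ M 5 3 = 0) ∧ M 5 4 = 0 ∧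
      d * M 5 5 = s d := by
    simpa [IsAbsoluteFlag, cross_eq_zero_iff, lineCoord_eq_iff, h6, hd]
      using hM.isAbsoluteFlag_row_six
  have h4 : M 4 0 = 0 ∧ M 4 1 = 0 ∧ M 4 2 = 0 ∧ M 4 3 = 0 := by simpa [hd] using e4
  have h3 : M 3 0 = 0 ∧ M 3 1 = 0 ∧ M 3 2 = 0 ∧ M 3 3 = 1 := by simpa [hd] using e3
  have h20 : M 2 0 = 0 := by simpa [hd, h5] using e2.2.2.2.1
  have h21 : M 2 1 = 0 := by simpa [hd, h54] using e2.2.2.2.2.1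
  have h10 : M 1 0 = 0 := by simpa [hd, h4] using e1.2.2.2.1
  intro i j hij
  fin_cases i <;> fin_cases j <;>
    simp [h10, h20, h21, h3, h4, h5, h54, h6] at hij ⊢

theorem isLowerTriangular {c : F} (h0 : M 0 = Pi.single 0 c) (hc : c ≠ 0) :
    M.IsLowerTriangular := by
  obtain ⟨e2, e3, e4, e5⟩ := hM.cross_row_zero
  simp only [h0, cross_single_zero_eq_iff] at e2 e3 e4 e5
  obtain ⟨h1, -, h12⟩ : (M 1 3 = 0 ∧ M 1 4 = 0 ∧ M 1 5 = 0 ∧ M 1 6 = 0) ∧ c * M 1 1 = s c ∧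
      M 1 2 = 0 := by
    simpa [IsAbsoluteFlag, cross_eq_zero_iff, lineCoord_eq_iff, h0, hc]
      using hM.isAbsoluteFlag_row_zero
  have h2 : M 2 3 = 0 ∧ M 2 4 = 0 ∧ M 2 5 = 0 ∧ M 2 6 = 0 := by simpa [hc] using e2
  have h3 : M 3 3 = 1 ∧ M 3 4 = 0 ∧ M 3 5 = 0 ∧ M 3 6 = 0 := by simpa [hc] using e3
  have h45 : M 4 5 = 0 := by simpa [hc, h12] using e4.2.2.1
  have h46 : M 4 6 = 0 := by simpa [hc, h1] using e4.2.2.2.1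
  have h56 : M 5 6 = 0 := by simpa [hc, h2] using e5.2.2.2.1
  intro i j hij
  replace hij : i < j := hij
  fin_cases i <;> fin_cases j <;>
    simp [h0, h1, h12, h2, h3, h45, h46, h56] at hij ⊢

end CommutesWithPolarity

end Triangularity

section PointStabiliser

variable {s : F →+* F} {t : ℕ}

theorem isTitsEndomorphism_iterateFrobenius [Fintype F] [CharP F 3] {m : ℕ}
    (hF : Fintype.card F = 3 ^ (2 * m + 1)) :
    IsTitsEndomorphism (iterateFrobenius F 3 (m + 1)) (3 ^ m) where
  map_map x := by
    rw [iterateFrobenius_def, iterateFrobenius_def, ← pow_mul, ← pow_add,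
      show m + 1 + (m + 1) = 2 * m + 1 + 1 by ring, pow_succ, pow_mul, ← hF, FiniteField.pow_card]
  map_pow x := by
    rw [iterateFrobenius_def, ← pow_mul, ← pow_add, show m + (m + 1) = 2 * m + 1 by ring, ← hF,
      FiniteField.pow_card]

theorem mem_upperTriangular_of_row_six {g : GL (Fin 7) F} (hg : g ∈ polarityGroup s)
    (h6 : g.1 6 = Pi.single 6 (g.1 6 6)) : g ∈ upperTriangular (Fin 7) F := by
  refine CommutesWithPolarity.isUpperTriangular hg h6 fun h => ?_
  have hrow : g.1.row 6 ≠ 0 := (linearIndependent_rows_iff_isUnit.2 g.isUnit).ne_zero 6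
  exact hrow (h6.trans (by rw [h, Pi.single_zero]))

theorem eq_one_of_row_zero {g : GL (Fin 7) F} (hg : g ∈ polarityGroup s)
    (hu : g ∈ unitriangular (Fin 7) F) (h0 : g.1 0 = Pi.single 0 1) : g = 1 := by
  rw [mem_unitriangular] at hu
  ext i j
  rw [Units.val_one, one_apply]
  split_ifs with hij
  · rw [← hij, hu.2]
  · rcases lt_or_gt_of_ne hij with h | h
    · exact CommutesWithPolarity.isLowerTriangular hg h0 one_ne_zero h
    · exact hu.1 h

variable [CharP F 3] (hs : IsTitsEndomorphism s t)
include hs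

theorem usub_le_polarityGroup : Usub t ≤ polarityGroup s :=
  (usub_le_reeGroup t).trans (reeGroup_le_polarityGroup hs)

/- The parameters of `α`, `β` and `γ` are chosen to kill the coordinates 1, 2 and 3 in turn; the
remaining ones then vanish because the point is absolute. -/
theorem IsAbsoluteFlag.exists_mem_usub_vecMul_eq_single {p q : Fin 7 → F}
    (h : IsAbsoluteFlag s p q) (h0 : p 0 ≠ 0) :
    ∃ u ∈ Usub t, p ᵥ* u.1 = Pi.single 0 (p 0) := by
  let a := s (-p 1 / p 0)
  let p₁ := p ᵥ* amat t a
  let b := s (p₁ 2 / p 0)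
  let p₂ := p₁ ᵥ* bmat t b
  let c := s (p₂ 3 / p 0)
  let p₃ := p₂ ᵥ* cmat t c
  obtain ⟨u, hu, hu_val⟩ := exists_mem_usub_val_eq_smat t a b c
  have hpu : p ᵥ* u.1 = p₃ := by simp only [hu_val, Smat, ← vecMul_vecMul, p₃, p₂, p₁]
  have ha : a ^ t = -p 1 / p 0 := hs.apply_pow _
  have hb : b ^ t = p₁ 2 / p 0 := hs.apply_pow _
  have hc : c ^ t = p₂ 3 / p 0 := hs.apply_pow _
  have h₁0 : p₁ 0 = p 0 := by simp [p₁, amat_vecMul]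
  have h₂0 : p₂ 0 = p 0 := by simp [p₂, bmat_vecMul, h₁0]
  have h₃0 : p₃ 0 = p 0 := by simp [p₃, cmat_vecMul, h₂0]
  have h₁1 : p₁ 1 = 0 := by simp [p₁, amat_vecMul, ha, mul_div_cancel₀ _ h0]
  have h₂1 : p₂ 1 = 0 := by simp [p₂, bmat_vecMul, h₁1]
  have h₃1 : p₃ 1 = 0 := by simp [p₃, cmat_vecMul, h₂1]
  have h₂2 : p₂ 2 = 0 := by simp [p₂, bmat_vecMul, hb, h₁0, mul_div_cancel₀ _ h0]
  have h₃2 : p₃ 2 = 0 := by simp [p₃, cmat_vecMul, h₂2]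
  have h₃3 : p₃ 3 = 0 := by simp [p₃, cmat_vecMul, hc, h₂0, mul_div_cancel₀ _ h0]
  have hflag := (usub_le_polarityGroup hs hu).isAbsoluteFlag_vecMul h
  rw [hpu] at hflag
  refine ⟨u, hu, ?_⟩
  rw [hpu, hflag.eq_single_zero (h₃0 ▸ h0) h₃1 h₃2 h₃3, h₃0]

theorem usub_eq_polarityGroup_inf_unitriangular :
    Usub t = polarityGroup s ⊓ unitriangular (Fin 7) F := by
  refine le_antisymm (le_inf (usub_le_polarityGroup hs) (usub_le_unitriangular t)) ?_
  rintro g ⟨hg, hgu⟩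
  have h00 : g.1 0 0 = 1 := (mem_unitriangular.1 hgu).2 0
  obtain ⟨u, hu, hmove⟩ :=
    hg.isAbsoluteFlag_row_zero.exists_mem_usub_vecMul_eq_single hs (h00 ▸ one_ne_zero)
  have hone : g * u = 1 := by
    refine eq_one_of_row_zero (mul_mem hg (usub_le_polarityGroup hs hu))
      (mul_mem hgu (usub_le_unitriangular t hu)) ?_
    rw [h00] at hmove
    rw [← hmove, Units.val_mul, mul_apply_eq_vecMul]
  exact eq_inv_of_mul_eq_one_left hone ▸ inv_mem hu

theorem mem_normalizer_usub {g : GL (Fin 7) F} (hg : g ∈ polarityGroup s)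
    (hgu : g ∈ upperTriangular (Fin 7) F) :
    g ∈ Subgroup.normalizer ((Usub t : Subgroup (GL (Fin 7) F)) : Set _) := by
  rw [usub_eq_polarityGroup_inf_unitriangular hs]
  exact Subgroup.inf_normalizer_le_normalizer_inf
    ⟨Subgroup.le_normalizer hg, upperTriangular_le_normalizer_unitriangular hgu⟩

theorem eq_one_of_vecMul_eq {v : GL (Fin 7) F} (hv : v ∈ Usub t) {p q : Fin 7 → F}
    (h : IsAbsoluteFlag s p q) (h0 : p 0 ≠ 0) (hfix : p ᵥ* v.1 = p) : v = 1 := by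
  obtain ⟨u, hu, hmove⟩ := h.exists_mem_usub_vecMul_eq_single hs h0
  have hw : u⁻¹ * v * u ∈ Usub t := mul_mem (mul_mem (inv_mem hu) hv) hu
  have hfix_w : Pi.single 0 (p 0) ᵥ* (u⁻¹ * v * u).1 = Pi.single 0 (p 0) := by
    rw [← hmove, vecMul_vecMul, ← Units.val_mul, mul_assoc, mul_inv_cancel_left, Units.val_mul,
      ← vecMul_vecMul, hfix]
  have hrow : (u⁻¹ * v * u).1 0 = Pi.single 0 1 := by
    refine smul_right_injective _ h0 (?_ : p 0 • (u⁻¹ * v * u).1.row 0 = p 0 • Pi.single 0 1)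
    rw [← single_vecMul, hfix_w, ← Pi.single_smul, smul_eq_mul, mul_one]
  have hone := eq_one_of_row_zero (usub_le_polarityGroup hs hw) (usub_le_unitriangular t hw) hrow
  rwa [mul_assoc, inv_mul_eq_one, eq_comm, mul_eq_right] at hone

theorem mem_upperTriangular_of_conj_mem {g v : GL (Fin 7) F} (hg : g ∈ polarityGroup s)
    (hv : v ∈ Usub t) (hv_ne : v ≠ 1) (hconj : g * v * g⁻¹ ∈ Usub t) :
    g ∈ upperTriangular (Fin 7) F := by
  have hflag := CommutesWithPolarity.isAbsoluteFlag_row_six hg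
  have hrow : (g * v * g⁻¹).1 6 = Pi.single 6 1 :=
    (mem_unitriangular.1 (usub_le_unitriangular t hconj)).row_eq_single Fin.le_last
  have hfix : g.1 6 ᵥ* v.1 = g.1 6 := by
    calc g.1 6 ᵥ* v.1 = (g * v * g⁻¹).1 6 ᵥ* g.1 := by
          rw [← mul_apply_eq_vecMul, ← mul_apply_eq_vecMul, ← Units.val_mul, ← Units.val_mul,
            inv_mul_cancel_right]
      _ = g.1 6 := by rw [hrow, single_one_vecMul, row_def]
  refine mem_upperTriangular_of_row_six hg (hflag.eq_single_six ?_)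
  by_contra h0
  exact hv_ne (eq_one_of_vecMul_eq hs hv hflag h0 hfix)

theorem isTISubgroup_usub_polarityGroup : IsTISubgroup (Usub t) (polarityGroup s) :=
  fun _ hg _ hv hv_ne hconj =>
    mem_normalizer_usub hs hg (mem_upperTriangular_of_conj_mem hs hg hv hv_ne hconj)

theorem eq_usub_of_isPGroup {Q : Subgroup (GL (Fin 7) F)} [Finite Q] (hQ : Q ≤ polarityGroup s)
    (hQ3 : IsPGroup 3 Q) (hUQ : Usub t ≤ Q) : Q = Usub t := by
  refine (isTISubgroup_usub_polarityGroup hs).eq_of_isPGroup (usub_ne_bot t) ?_ hQ hQ3 hUQ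
  rintro g hg hgU ⟨k, hk⟩
  obtain ⟨v, hv, hv_ne⟩ := (Usub t).bot_or_exists_ne_one.resolve_left (usub_ne_bot (F := F) t)
  have hconj := (Subgroup.mem_normalizer_iff.1 hgU v).1 hv
  have hupper := mem_upperTriangular_of_conj_mem hs hg hv hv_ne hconj
  rw [usub_eq_polarityGroup_inf_unitriangular hs]
  exact ⟨hg, mem_unitriangular_of_pow_eq_one hupper hk⟩

end PointStabiliser

end ReePaper

/-- `U(q)` is a Sylow 3-subgroup of `Ree(q)` (a 3-subgroup that is maximal among 3-subgroups
of `Ree(q)`), and any two distinct `Ree(q)`-conjugates of `U(q)` intersect trivially. -/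
theorem usub_sylow_and_tihi (m : ℕ) (hm : 0 < m) (F : Type*) [Field F] [Fintype F]
    (hF : Fintype.card F = 3 ^ (2 * m + 1)) :
    Usub (F := F) (3 ^ m) ≤ ReeGroup (F := F) (3 ^ m) ∧
    IsPGroup 3 ↥(Usub (F := F) (3 ^ m)) ∧
    (∀ Q : Subgroup (GL (Fin 7) F), Q ≤ ReeGroup (F := F) (3 ^ m) → IsPGroup 3 ↥Q →
      Usub (F := F) (3 ^ m) ≤ Q → Q = Usub (F := F) (3 ^ m)) ∧
    (∀ g₁ g₂ : GL (Fin 7) F, g₁ ∈ ReeGroup (F := F) (3 ^ m) → g₂ ∈ ReeGroup (F := F) (3 ^ m) →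
      (Usub (F := F) (3 ^ m)).map (MulAut.conj g₁).toMonoidHom ≠
        (Usub (F := F) (3 ^ m)).map (MulAut.conj g₂).toMonoidHom →
      (Usub (F := F) (3 ^ m)).map (MulAut.conj g₁).toMonoidHom ⊓
        (Usub (F := F) (3 ^ m)).map (MulAut.conj g₂).toMonoidHom = ⊥) := by
  have := charP_of_card_eq_prime_pow hF
  have hs := isTitsEndomorphism_iterateFrobenius hF
  have hle := reeGroup_le_polarityGroup hs
  refine ⟨usub_le_reeGroup _, (isPGroup_unitriangular 3).to_le (usub_le_unitriangular _),
    fun Q hQ hQ3 hUQ => eq_usub_of_isPGroup hs (hQ.trans hle) hQ3 hUQ,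
    fun g₁ g₂ hg₁ hg₂ hne => ?_⟩
  exact (isTISubgroup_usub_polarityGroup hs).map_conj_inf_map_conj (hle hg₁) (hle hg₂) hne
end
end

section
/- The number of elements of order exactly q−1 in the subgroup U(q)H(q) = {u·h : u ∈ U(q), h ∈ H(q)} equals φ(q−1)·q^3, where φ is Euler's totient function; equivalently, the proportion of elements of order q−1 in U(q)H(q) is φ(q−1)/(q−1). -/
open Matrix

noncomputable section

open ReePaper

/-!
The group `H` normalises `U` and the orders `q ^ 3` and `q - 1` are coprime. Conjugation by
`h = h(λ)` multiplies the parameters of `S(a, b, c)` by `λ ^ (2 - 3 t)`, `λ ^ (3 t - 1)` and `λ`;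
as `σ : x ↦ x ^ t` satisfies `σ (σ x) ^ 3 = x`, each of these equals `1` only if `λ ^ 2 = 1`. Hence
an `h` of order `q - 1 > 2` fixes no nontrivial element of `U`, so that `v ↦ v h v⁻¹ h⁻¹` permutes
`U` and every `u h` is conjugate to `h`. Conversely, `(u h) ^ k ∈ U h ^ k` shows that the orders of
`u h` and `h` agree up to a factor dividing `q ^ 3`. Therefore `u h` has order `q - 1` exactly when
`h` does, and `H` is cyclic of order `q - 1`.
-/

namespace ReePaper

section CoprimeAction

variable {G : Type*} [Group G] {U H : Subgroup G} {u h : G} {n : ℕ}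

theorem exists_conj_eq_mul_of_fixedPointFree [Finite U]
    (hh : h ∈ Subgroup.normalizer (U : Set G))
    (hfix : ∀ v ∈ U, Commute h v → v = 1) (hu : u ∈ U) : ∃ v ∈ U, v * h * v⁻¹ = u * h := by
  have hfree : MonoidHom.FixedPointFree (U.normalizerMonoidHom ⟨h, hh⟩) := fun v hv =>
    Subtype.ext <| hfix v v.2 <| mul_inv_eq_iff_eq_mul.mp (congrArg Subtype.val hv)
  obtain ⟨v, hv⟩ := hfree.commutatorMap_surjective ⟨u, hu⟩
  have hv : (v : G) / (h * v * h⁻¹) = u := congrArg Subtype.val hv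
  exact ⟨v, v.2, by rw [← hv, div_eq_mul_inv]; group⟩

theorem mul_pow_div_pow_mem (hh : h ∈ Subgroup.normalizer (U : Set G)) (hu : u ∈ U) (k : ℕ) :
    (u * h) ^ k / h ^ k ∈ U := by
  induction k with
  | zero => simp
  | succ k ih =>
    have hconj : h ^ k * u * (h ^ k)⁻¹ ∈ U :=
      (Subgroup.mem_normalizer_iff.mp (pow_mem hh k) u).mp hu
    have hsplit : (u * h) ^ (k + 1) / h ^ (k + 1) =
        (u * h) ^ k / h ^ k * (h ^ k * u * (h ^ k)⁻¹) := by
      simp only [div_eq_mul_inv, pow_succ]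
      group
    exact hsplit ▸ mul_mem ih hconj

theorem orderOf_mul_eq_iff [Finite U] (hnorm : H ≤ Subgroup.normalizer (U : Set G))
    (hdisj : Disjoint U H) (hcop : (Nat.card U).Coprime n)
    (hfix : ∀ h ∈ H, orderOf h = n → ∀ v ∈ U, Commute h v → v = 1) (hu : u ∈ U) (hh : h ∈ H) :
    orderOf (u * h) = n ↔ orderOf h = n := by
  refine ⟨fun hn => Nat.dvd_antisymm ?_ ?_, fun hn => ?_⟩
  · have hmem := mul_pow_div_pow_mem (hnorm hh) hu n
    rw [← hn, pow_orderOf_eq_one, hn, one_div, inv_mem_iff] at hmem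
    exact orderOf_dvd_of_pow_eq_one (Subgroup.disjoint_def.mp hdisj hmem (pow_mem hh n))
  · have hmem := mul_pow_div_pow_mem (hnorm hh) hu (orderOf h)
    rw [pow_orderOf_eq_one, div_one] at hmem
    have hone : (u * h) ^ orderOf h = 1 := orderOf_eq_one_iff.mp <|
      Nat.eq_one_of_dvd_coprimes hcop (U.orderOf_dvd_natCard hmem) (hn ▸ orderOf_pow_dvd _)
    exact hn ▸ orderOf_dvd_of_pow_eq_one hone
  · obtain ⟨v, -, hv⟩ := exists_conj_eq_mul_of_fixedPointFree (hnorm hh) (hfix h hh hn) hu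
    rw [← hv, ← hn]
    exact (MulAut.conj v).orderOf_eq h

theorem natCard_mul_orderOf_eq [Finite U] (hnorm : H ≤ Subgroup.normalizer (U : Set G))
    (hdisj : Disjoint U H) (hcop : (Nat.card U).Coprime n)
    (hfix : ∀ h ∈ H, orderOf h = n → ∀ v ∈ U, Commute h v → v = 1) :
    Nat.card {g : G // (∃ u ∈ U, ∃ h ∈ H, g = u * h) ∧ orderOf g = n} =
      Nat.card {h : H // orderOf h = n} * Nat.card U := by
  have horder (u : U) (h : H) : orderOf (u * h : G) = n ↔ orderOf h = n := by
    rw [orderOf_mul_eq_iff hnorm hdisj hcop hfix u.2 h.2, Subgroup.orderOf_coe]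
  rw [← Nat.card_prod]
  refine (Nat.card_eq_of_bijective (fun x => ⟨x.2 * x.1.1,
    ⟨x.2, x.2.2, x.1.1, x.1.1.2, rfl⟩, (horder _ _).mpr x.1.2⟩) ⟨?_, ?_⟩).symm
  · rintro ⟨⟨h, _⟩, u⟩ ⟨⟨h', _⟩, u'⟩ heq
    obtain ⟨rfl, rfl⟩ := Prod.mk.inj <|
      @Subgroup.mul_injective_of_disjoint _ _ _ _ hdisj (u, h) (u', h') (congrArg Subtype.val heq)
    rfl
  · rintro ⟨_, ⟨u, hu, h, hh, rfl⟩, hn⟩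
    exact ⟨⟨⟨⟨h, hh⟩, (horder ⟨u, hu⟩ ⟨h, hh⟩).mp hn⟩, ⟨u, hu⟩⟩, rfl⟩

theorem natCard_orderOf_eq_natCard_of_isCyclic [Finite G] [IsCyclic G] :
    Nat.card {g : G // orderOf g = Nat.card G} = Nat.totient (Nat.card G) := by
  classical
  have := Fintype.ofFinite G
  rw [Nat.card_eq_fintype_card, Fintype.card_subtype]
  exact IsCyclic.card_orderOf_eq_totient (by rw [Nat.card_eq_fintype_card])

end CoprimeAction

section Unipotent

variable {R : Type*} [CommRing R]

/-- The product `α(a) β(b) γ(c)` over a ring of characteristic three, with the `t`-th powers of `a`,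
`b` and `c` replaced by independent variables `A`, `B` and `C`, so that the multiplication law
becomes a polynomial identity modulo three. -/
def unipotentMatrix (a A b B c C : R) : Matrix (Fin 7) (Fin 7) R :=
  !![1, A, -B, -C + A*B, -A*C - b - a*A^3, -c - B*C - A*B^2 - a^2*A^3,
      -C^2 + A*c - A*B*C - b*B - a*A^3*B + a^2*A^4;
     0, 1, a, B + a*A, -C - a*A^2, a*C - B^2 + a*A*B,
      c - B*C - a*A*C + a*b - a*A^2*B - a^2*A^3;
     0, 0, 1, A, -A^2, C + A*B, -A*C + b - A^2*B + a*A^3;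
     0, 0, 0, 1, A, B, -C + A*B;
     0, 0, 0, 0, 1, -a, B + a*A;
     0, 0, 0, 0, 0, 1, -A;
     0, 0, 0, 0, 0, 0, 1]

theorem unipotentMatrix_zero : unipotentMatrix (0 : R) 0 0 0 0 0 = 1 := by
  ext i j
  fin_cases i <;> fin_cases j <;> simp [unipotentMatrix]

theorem det_unipotentMatrix (a A b B c C : R) : (unipotentMatrix a A b B c C).det = 1 := by
  have hupper : (unipotentMatrix a A b B c C).IsUpperTriangular := by
    intro i j hij
    fin_cases i <;> fin_cases j <;> first | rfl | exact absurd hij (by decide)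
  rw [Matrix.det_of_isUpperTriangular hupper]
  simp [unipotentMatrix, Fin.prod_univ_succ]

set_option maxHeartbeats 1000000 in
-- The identity is checked entry by entry, with up to twelve variables per entry.
theorem unipotentMatrix_mul [CharP R 3] (a A b B c C a' A' b' B' c' C' : R) :
    unipotentMatrix a A b B c C * unipotentMatrix a' A' b' B' c' C' =
      unipotentMatrix (a + a') (A + A') (b + b' - a * A' ^ 3) (B + B' - A * a')
        (c + c' - a' * b + a * a' * A' ^ 3 - a ^ 2 * A' ^ 3)
        (C + C' - A' * B + A * A' * a' - A ^ 2 * a') := by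
  have : (3 : R) = 0 := CharP.cast_eq_zero R 3
  ext i j
  fin_cases i <;> fin_cases j <;>
    simp only [unipotentMatrix, Matrix.mul_apply, Fin.sum_univ_seven, Matrix.of_apply,
      Matrix.cons_val, Fin.zero_eta, Fin.mk_one, Fin.reduceFinMk] <;>
    grind

theorem eq_of_unipotentMatrix_eq {a A b B c C a' A' b' B' c' C' : R}
    (h : unipotentMatrix a A b B c C = unipotentMatrix a' A' b' B' c' C') :
    a = a' ∧ b = b' ∧ c = c' := by
  have hA := congrFun₂ h 0 1
  have hB := congrFun₂ h 0 2
  have hC := congrFun₂ h 0 3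
  have hb := congrFun₂ h 0 4
  have hc := congrFun₂ h 0 5
  have ha := congrFun₂ h 1 2
  simp only [unipotentMatrix, Matrix.of_apply, Matrix.cons_val] at hA hB hC hb hc ha
  grind

/-- A Tits endomorphism for the Ree groups: a square root of the inverse Frobenius in
characteristic three. On the field of order `q` it is `x ↦ x ^ t`, since `3 * t ^ 2 = q`. -/
def IsTitsEndomorphism_s8 (σ : R →+* R) : Prop :=
  ∀ x, σ (σ x) ^ 3 = x

variable {σ : R →+* R}

theorem IsTitsEndomorphism_s8.apply_pow_three (hσ : IsTitsEndomorphism_s8 σ) (x : R) :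
    σ (σ x ^ 3) = x := by
  rw [map_pow, hσ]

variable (σ) in
/-- The element `S(a, b, c)` of `GL(7, R)`, with an endomorphism `σ` in place of `x ↦ x ^ t`. -/
def unipotent (a b c : R) : GL (Fin 7) R :=
  Matrix.GeneralLinearGroup.mk'' (unipotentMatrix a (σ a) b (σ b) c (σ c))
    (by rw [det_unipotentMatrix]; exact isUnit_one)

variable (σ) in
theorem coe_unipotent (a b c : R) :
    (unipotent σ a b c : Matrix (Fin 7) (Fin 7) R) =
      unipotentMatrix a (σ a) b (σ b) c (σ c) := rfl

theorem unipotent_zero : unipotent σ 0 0 0 = 1 :=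
  Units.ext <| by simp only [coe_unipotent, map_zero, unipotentMatrix_zero, Units.val_one]

theorem unipotent_injective :
    Function.Injective fun p : R × R × R => unipotent σ p.1 p.2.1 p.2.2 := by
  rintro ⟨a, b, c⟩ ⟨a', b', c'⟩ h
  obtain ⟨rfl, rfl, rfl⟩ := eq_of_unipotentMatrix_eq (congrArg Units.val h)
  rfl

theorem unipotent_mul [CharP R 3] (hσ : IsTitsEndomorphism_s8 σ) (a b c a' b' c' : R) :
    unipotent σ a b c * unipotent σ a' b' c' =
      unipotent σ (a + a') (b + b' - a * σ a' ^ 3)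
        (c + c' - a' * b + a * a' * σ a' ^ 3 - a ^ 2 * σ a' ^ 3) :=
  Units.ext <| by
    simp only [Units.val_mul, coe_unipotent, unipotentMatrix_mul, map_add, map_sub, map_mul,
      map_pow, hσ a']

/-- The group `{S(a, b, c)}`, which is `U(q)` when `σ` is `x ↦ x ^ t` on the field of order `q`. -/
def unipotentSubgroup [CharP R 3] (hσ : IsTitsEndomorphism_s8 σ) : Subgroup (GL (Fin 7) R) where
  carrier := {g | ∃ a b c, unipotent σ a b c = g}
  one_mem' := ⟨0, 0, 0, unipotent_zero⟩
  mul_mem' := by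
    rintro _ _ ⟨a, b, c, rfl⟩ ⟨a', b', c', rfl⟩
    exact ⟨_, _, _, (unipotent_mul hσ a b c a' b' c').symm⟩
  inv_mem' := by
    rintro _ ⟨a, b, c, rfl⟩
    refine ⟨-a, -b - a * σ a ^ 3, -c - a * b + a ^ 2 * σ a ^ 3, ?_⟩
    rw [eq_inv_iff_mul_eq_one, unipotent_mul hσ, ← unipotent_zero (σ := σ)]
    congr 1 <;> ring

theorem natCard_unipotentSubgroup [CharP R 3] (hσ : IsTitsEndomorphism_s8 σ) :
    Nat.card (unipotentSubgroup hσ) = Nat.card R ^ 3 := by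
  have hbij : Function.Bijective fun p : R × R × R =>
      (⟨unipotent σ p.1 p.2.1 p.2.2, p.1, p.2.1, p.2.2, rfl⟩ : unipotentSubgroup hσ) :=
    ⟨fun _ _ h => unipotent_injective (congrArg Subtype.val h),
      fun ⟨_, a, b, c, h⟩ => ⟨(a, b, c), Subtype.ext h⟩⟩
  rw [← Nat.card_eq_of_bijective _ hbij, Nat.card_prod, Nat.card_prod]
  ring

end Unipotent

section Torus

variable {F : Type*} [Field F] {t : ℕ}

theorem hmat_one : hmat t (1 : Fˣ) = 1 := by
  rw [hmat, ← Matrix.diagonal_one]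
  congr 1
  ext i
  fin_cases i <;> simp

theorem hmat_mul (l k : Fˣ) : hmat t (l * k) = hmat t l * hmat t k := by
  rw [hmat, hmat, hmat, Matrix.diagonal_mul_diagonal]
  congr 1
  ext i
  fin_cases i <;> simp [mul_zpow, mul_pow, mul_comm]

theorem hmat_eq_diagonal (l : Fˣ) : hmat t l = Matrix.diagonal
    ![(l : F) ^ t, l / (l : F) ^ t, ((l : F) ^ t) ^ 2 / l, 1, l / ((l : F) ^ t) ^ 2,
      (l : F) ^ t / l, 1 / (l : F) ^ t] := by
  have hl : (l : F) ≠ 0 := l.ne_zero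
  have htwo : (l : F) ^ (2 * (t : ℤ)) = ((l : F) ^ t) ^ 2 := by
    rw [mul_comm, _root_.zpow_mul]
    norm_cast
  rw [hmat]
  congr 1
  ext i
  fin_cases i <;> simp [zpow_sub₀ hl, htwo]

variable (F t) in
/-- The homomorphism `λ ↦ h(λ)`, whose image is `H(q)`. -/
def torus : Fˣ →* GL (Fin 7) F :=
  MonoidHom.toHomUnits
    { toFun := hmat t
      map_one' := hmat_one
      map_mul' := hmat_mul }

theorem coe_torus (l : Fˣ) : (torus F t l : Matrix (Fin 7) (Fin 7) F) = hmat t l := rfl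

variable {σ : F →+* F}

theorem eq_one_of_hmat_apply_zero_zero_eq_one (ht : ∀ x, σ x = x ^ t) {l : Fˣ}
    (hl : hmat t l 0 0 = 1) : l = 1 := by
  have hpow : (l : F) ^ t = 1 := by simpa [hmat] using hl
  exact Units.val_eq_one.mp (σ.injective ((ht l).trans (hpow.trans σ.map_one.symm)))

theorem torus_injective (ht : ∀ x, σ x = x ^ t) : Function.Injective (torus F t) :=
  (injective_iff_map_eq_one _).mpr fun l hl =>
    eq_one_of_hmat_apply_zero_zero_eq_one ht (by rw [← coe_torus, hl]; rfl)

theorem natCard_range_torus (ht : ∀ x, σ x = x ^ t) :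
    Nat.card (torus F t).range = Nat.card F - 1 := by
  rw [← Nat.card_congr (MonoidHom.ofInjective (torus_injective ht)).toEquiv, Nat.card_units]

theorem natCard_range_torus_orderOf_eq [Finite F] (ht : ∀ x, σ x = x ^ t) :
    Nat.card {h : (torus F t).range // orderOf h = Nat.card F - 1} =
      Nat.totient (Nat.card F - 1) := by
  have : IsCyclic (torus F t).range :=
    isCyclic_of_surjective _ (torus F t).rangeRestrict_surjective
  rw [← natCard_range_torus ht]
  exact natCard_orderOf_eq_natCard_of_isCyclic

theorem diagonal_mul_unipotentMatrix {L T : F} (hL : L ≠ 0) (hT : T ≠ 0) (a A b B c C : F) :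
    Matrix.diagonal ![T, L / T, T ^ 2 / L, 1, L / T ^ 2, T / L, 1 / T] *
        unipotentMatrix a A b B c C =
      unipotentMatrix (L ^ 2 / T ^ 3 * a) (T ^ 2 / L * A) (T ^ 3 / L * b) (L / T * B) (L * c)
        (T * C) * Matrix.diagonal ![T, L / T, T ^ 2 / L, 1, L / T ^ 2, T / L, 1 / T] := by
  ext i j
  rw [Matrix.diagonal_mul, Matrix.mul_diagonal]
  fin_cases i <;> fin_cases j <;>
    simp only [unipotentMatrix, Matrix.of_apply, Matrix.cons_val, Fin.zero_eta, Fin.mk_one,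
      Fin.reduceFinMk] <;>
    field_simp <;>
    ring

theorem torus_mul_unipotent (hσ : IsTitsEndomorphism_s8 σ) (ht : ∀ x, σ x = x ^ t) (l : Fˣ)
    (a b c : F) :
    torus F t l * unipotent σ a b c =
      unipotent σ (l ^ 2 / σ l ^ 3 * a) (σ l ^ 3 / l * b) (l * c) * torus F t l := by
  have hσl : σ l ≠ 0 := (map_ne_zero σ).mpr l.ne_zero
  refine Units.ext ?_
  simp only [Units.val_mul, coe_torus, hmat_eq_diagonal, coe_unipotent, ← ht,
    diagonal_mul_unipotentMatrix l.ne_zero hσl, map_mul, map_div₀, map_pow, hσ (l : F)]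

theorem unipotent_eq_one_of_commute_torus (hσ : IsTitsEndomorphism_s8 σ) (ht : ∀ x, σ x = x ^ t)
    {l : Fˣ} (hl : l ^ 2 ≠ 1) {a b c : F} (hcomm : Commute (torus F t l) (unipotent σ a b c)) :
    unipotent σ a b c = 1 := by
  have hL : (l : F) ≠ 0 := l.ne_zero
  have hT : σ l ≠ 0 := (map_ne_zero σ).mpr hL
  have hsq : (l : F) ^ 2 ≠ 1 := fun h => hl (Units.ext (by simpa using h))
  have ha : (l : F) ^ 2 / σ l ^ 3 ≠ 1 := fun h => by
    rw [div_eq_one_iff_eq (pow_ne_zero 3 hT)] at h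
    have hTsq : σ l ^ 2 = l := by rw [← map_pow, h, hσ.apply_pow_three]
    have hT1 : σ l = 1 := by
      refine mul_left_cancel₀ (pow_ne_zero 3 hT) ?_
      linear_combination (σ l ^ 2 + l) * hTsq + h
    exact hsq (by rw [← hTsq, hT1]; norm_num)
  have hb : σ l ^ 3 / (l : F) ≠ 1 := fun h => by
    rw [div_eq_one_iff_eq hL] at h
    have hTl : σ l = l := by conv_lhs => rw [← h, hσ.apply_pow_three]
    refine hsq (mul_left_cancel₀ hL ?_)
    rw [hTl] at h
    linear_combination h
  have hc : (l : F) ≠ 1 := fun h => hsq (by rw [h, one_pow])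
  have heq := mul_right_cancel ((torus_mul_unipotent hσ ht l a b c).symm.trans hcomm)
  obtain ⟨ha', hb', hc'⟩ := eq_of_unipotentMatrix_eq (congrArg Units.val heq)
  have hzero {r x : F} (hr : r ≠ 1) (hx : r * x = x) : x = 0 :=
    by_contra fun hx0 => hr ((mul_eq_right₀ hx0).mp hx)
  rw [hzero ha ha', hzero hb hb', hzero hc hc', unipotent_zero]

end Torus

section Ree

variable {F : Type*} [Field F] {t : ℕ} {σ : F →+* F}

theorem amat_eq_unipotent (ht : ∀ x, σ x = x ^ t) (x : F) :
    amat t x = unipotent σ x 0 0 := by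
  rw [coe_unipotent, map_zero, ht]
  ext i j
  fin_cases i <;> fin_cases j <;>
    simp only [amat, unipotentMatrix, Matrix.of_apply, Matrix.cons_val, Fin.zero_eta,
      Fin.mk_one, Fin.reduceFinMk] <;>
    ring

theorem bmat_eq_unipotent (ht : ∀ x, σ x = x ^ t) (x : F) :
    bmat t x = unipotent σ 0 x 0 := by
  rw [coe_unipotent, map_zero, ht]
  ext i j
  fin_cases i <;> fin_cases j <;>
    simp only [bmat, unipotentMatrix, Matrix.of_apply, Matrix.cons_val, Fin.zero_eta,
      Fin.mk_one, Fin.reduceFinMk] <;>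
    ring

theorem cmat_eq_unipotent (ht : ∀ x, σ x = x ^ t) (x : F) :
    cmat t x = unipotent σ 0 0 x := by
  rw [coe_unipotent, map_zero, ht]
  ext i j
  fin_cases i <;> fin_cases j <;>
    simp only [cmat, unipotentMatrix, Matrix.of_apply, Matrix.cons_val, Fin.zero_eta,
      Fin.mk_one, Fin.reduceFinMk] <;>
    ring

theorem Hsub_eq_range_torus : Hsub t = (torus F t).range := by
  have hset : {g : GL (Fin 7) F | ∃ l : Fˣ, (g : Matrix (Fin 7) (Fin 7) F) = hmat t l} =
      (torus F t).range := by
    ext g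
    simp [Units.ext_iff, coe_torus, eq_comm]
  rw [Hsub, hset, Subgroup.closure_eq]

variable [CharP F 3]

theorem Usub_eq_unipotentSubgroup (hσ : IsTitsEndomorphism_s8 σ) (ht : ∀ x, σ x = x ^ t) :
    Usub t = unipotentSubgroup hσ := by
  apply le_antisymm
  · rw [Usub, Subgroup.closure_le]
    rintro g (⟨x, hx⟩ | ⟨x, hx⟩ | ⟨x, hx⟩)
    · exact ⟨x, 0, 0, Units.ext (hx.trans (amat_eq_unipotent ht x)).symm⟩
    · exact ⟨0, x, 0, Units.ext (hx.trans (bmat_eq_unipotent ht x)).symm⟩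
    · exact ⟨0, 0, x, Units.ext (hx.trans (cmat_eq_unipotent ht x)).symm⟩
  · rintro _ ⟨a, b, c, rfl⟩
    have hfactor :
        unipotent σ a b c = unipotent σ a 0 0 * unipotent σ 0 b 0 * unipotent σ 0 0 c := by
      simp [unipotent_mul hσ]
    rw [hfactor]
    refine mul_mem (mul_mem ?_ ?_) ?_ <;> apply Subgroup.subset_closure
    · exact Or.inl ⟨a, (amat_eq_unipotent ht a).symm⟩
    · exact Or.inr (Or.inl ⟨b, (bmat_eq_unipotent ht b).symm⟩)
    · exact Or.inr (Or.inr ⟨c, (cmat_eq_unipotent ht c).symm⟩)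

theorem eq_one_of_torus_mem_unipotentSubgroup (hσ : IsTitsEndomorphism_s8 σ)
    (ht : ∀ x, σ x = x ^ t) {l : Fˣ} (hl : torus F t l ∈ unipotentSubgroup hσ) : l = 1 := by
  obtain ⟨a, b, c, h⟩ := hl
  exact eq_one_of_hmat_apply_zero_zero_eq_one ht (by rw [← coe_torus, ← h]; rfl)

theorem disjoint_unipotentSubgroup_range_torus (hσ : IsTitsEndomorphism_s8 σ)
    (ht : ∀ x, σ x = x ^ t) : Disjoint (unipotentSubgroup hσ) (torus F t).range := by
  rw [Subgroup.disjoint_def]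
  rintro _ hU ⟨l, rfl⟩
  rw [eq_one_of_torus_mem_unipotentSubgroup hσ ht hU, map_one]

theorem range_torus_le_normalizer (hσ : IsTitsEndomorphism_s8 σ) (ht : ∀ x, σ x = x ^ t) :
    (torus F t).range ≤ Subgroup.normalizer (unipotentSubgroup hσ : Set (GL (Fin 7) F)) := by
  have hconj (l : Fˣ) {u : GL (Fin 7) F} (hu : u ∈ unipotentSubgroup hσ) :
      torus F t l * u * (torus F t l)⁻¹ ∈ unipotentSubgroup hσ := by
    obtain ⟨a, b, c, rfl⟩ := hu
    exact ⟨_, _, _, eq_mul_inv_of_mul_eq (torus_mul_unipotent hσ ht l a b c).symm⟩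
  rintro _ ⟨l, rfl⟩
  refine Subgroup.mem_normalizer_iff.mpr fun u => ⟨hconj l, fun hu => ?_⟩
  simpa [mul_assoc] using hconj l⁻¹ hu

theorem eq_one_of_commute_of_two_lt_orderOf (hσ : IsTitsEndomorphism_s8 σ) (ht : ∀ x, σ x = x ^ t)
    {h v : GL (Fin 7) F} (hh : h ∈ (torus F t).range) (horder : 2 < orderOf h)
    (hv : v ∈ unipotentSubgroup hσ) (hcomm : Commute h v) : v = 1 := by
  obtain ⟨l, rfl⟩ := hh
  obtain ⟨a, b, c, rfl⟩ := hv
  refine unipotent_eq_one_of_commute_torus hσ ht (fun hl => ?_) hcomm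
  rw [orderOf_injective _ (torus_injective ht)] at horder
  exact horder.not_ge (orderOf_le_of_pow_eq_one two_pos hl)

theorem isTitsEndomorphism_iterateFrobenius_s8 [Fintype F] {m : ℕ}
    (hF : Fintype.card F = 3 ^ (2 * m + 1)) : IsTitsEndomorphism_s8 (iterateFrobenius F 3 m) := by
  intro x
  have hexp : 3 ^ m * (3 ^ m * 3) = Fintype.card F := by
    rw [hF]
    ring
  rw [iterateFrobenius_def, iterateFrobenius_def, ← pow_mul, ← pow_mul, hexp, FiniteField.pow_card]

end Ree

end ReePaper

/-- The number of elements of order exactly `q - 1` in `U(q)H(q)` equals `φ(q-1) · q^3`. -/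
theorem uh_order_count (m : ℕ) (hm : 0 < m) (F : Type*) [Field F] [Fintype F]
    (hF : Fintype.card F = 3 ^ (2 * m + 1)) :
    Nat.card {g : GL (Fin 7) F //
        (∃ u ∈ Usub (F := F) (3 ^ m), ∃ h ∈ Hsub (F := F) (3 ^ m), g = u * h) ∧
        orderOf g = 3 ^ (2 * m + 1) - 1} =
      Nat.totient (3 ^ (2 * m + 1) - 1) * (3 ^ (2 * m + 1)) ^ 3 := by
  have : CharP F 3 := charP_of_card_eq_prime_pow hF
  have hσ := isTitsEndomorphism_iterateFrobenius_s8 hF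
  have ht (x : F) : iterateFrobenius F 3 m x = x ^ 3 ^ m := iterateFrobenius_def 3 m x
  rw [← Nat.card_eq_fintype_card] at hF
  have hq : 2 < Nat.card F - 1 := by
    have : 3 ^ 3 ≤ Nat.card F := hF ▸ Nat.pow_le_pow_right three_pos (by lia)
    lia
  rw [Usub_eq_unipotentSubgroup hσ ht, Hsub_eq_range_torus, ← hF,
    natCard_mul_orderOf_eq (range_torus_le_normalizer hσ ht)
      (disjoint_unipotentSubgroup_range_torus hσ ht), natCard_range_torus_orderOf_eq ht,
    natCard_unipotentSubgroup hσ]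
  · rw [natCard_unipotentSubgroup hσ]
    exact Nat.Coprime.pow_left 3 <|
      (Nat.coprime_self_sub_right Nat.card_pos).mpr (Nat.coprime_one_right _)
  · intro h hh horder v hv
    exact eq_one_of_commute_of_two_lt_orderOf hσ ht hh (horder ▸ hq) hv
end
end
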